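/- arXiv:2006.00801 — 2 statements merged into one kernel-verified Lean document; each statement's English description precedes it below -/
import Mathlib

section
/- Let a, b > 0, φ ∈ ℝ, ε ∈ {1, −1}, and let Q ∈ ℝ^{n×n} be skew-symmetric. Define f(z) := ε·a^{−1/2}·cosh(√(ab)·z + φ) and g(z) := −ε·b^{−1/2}·sinh(√(ab)·z + φ), and T_d := [[aQ, −I],[I, −bQ]]. Then the gradient-generating equation holds: for all z ∈ ℝ, f′(z)f(z)·aQ + f′(z)g(z)·(−I) + g′(z)f(z)·I + g′(z)g(z)·(−bQ) = −I. -/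
/-! Write `s`, `c` for `sinh`, `cosh` at `√(ab)·z + φ`. Since `√(ab) = √a·√b`, the derivatives are
`f' = ε√b·s` and `g' = -ε√a·c`. With `ε² = 1`, the two diagonal contributions `±√(ab)·s·c·Q`
cancel, and the off-diagonal ones add up to `(s² - c²)·I = -I`. -/

open Matrix

/-- `f(z) = ε·a^{−1/2} cosh(√(ab)·z + φ)`. -/
noncomputable def fGen (ε a b φ : ℝ) : ℝ → ℝ :=
  fun z => ε * ((Real.sqrt a)⁻¹ * Real.cosh (Real.sqrt (a * b) * z + φ))

/-- `g(z) = −ε·b^{−1/2} sinh(√(ab)·z + φ)`. -/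
noncomputable def gGen (ε a b φ : ℝ) : ℝ → ℝ :=
  fun z => -(ε * ((Real.sqrt b)⁻¹ * Real.sinh (Real.sqrt (a * b) * z + φ)))

theorem hasDerivAt_fGen {a : ℝ} (b φ ε : ℝ) (ha : 0 < a) (z : ℝ) :
    HasDerivAt (fGen ε a b φ)
      (ε * (Real.sqrt b * Real.sinh (Real.sqrt (a * b) * z + φ))) z := by
  have hl : HasDerivAt (fun z : ℝ => Real.sqrt (a * b) * z + φ) (Real.sqrt (a * b)) z := by
    simpa using ((hasDerivAt_id z).const_mul (Real.sqrt (a * b))).add_const φ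
  have hA : Real.sqrt a ≠ 0 := (Real.sqrt_pos.2 ha).ne'
  refine ((hl.cosh.const_mul (Real.sqrt a)⁻¹).const_mul ε).congr_deriv ?_
  nth_rewrite 2 [Real.sqrt_mul ha.le]
  field_simp

theorem hasDerivAt_gGen {a b : ℝ} (φ ε : ℝ) (ha : 0 < a) (hb : 0 < b) (z : ℝ) :
    HasDerivAt (gGen ε a b φ)
      (-(ε * (Real.sqrt a * Real.cosh (Real.sqrt (a * b) * z + φ)))) z := by
  have hl : HasDerivAt (fun z : ℝ => Real.sqrt (a * b) * z + φ) (Real.sqrt (a * b)) z := by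
    simpa using ((hasDerivAt_id z).const_mul (Real.sqrt (a * b))).add_const φ
  have hB : Real.sqrt b ≠ 0 := (Real.sqrt_pos.2 hb).ne'
  refine ((hl.sinh.const_mul (Real.sqrt b)⁻¹).const_mul ε).neg.congr_deriv ?_
  nth_rewrite 2 [Real.sqrt_mul ha.le]
  field_simp

/-- generating functions for `T_d = [[aQ, −I],[I, −bQ]]` with `Q` skew:
the gradient-generating equation `f'f·(aQ) + f'g·(−I) + g'f·I + g'g·(−bQ) = −I` holds. -/
theorem stmt7 {n : ℕ} (a b φ ε : ℝ) (ha : 0 < a) (hb : 0 < b) (hε : ε = 1 ∨ ε = -1)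
    (Q : Matrix (Fin n) (Fin n) ℝ) (hQ : Qᵀ = -Q) :
    ∀ z : ℝ,
      (deriv (fGen ε a b φ) z * fGen ε a b φ z) • (a • Q)
        + (deriv (fGen ε a b φ) z * gGen ε a b φ z) • (-(1 : Matrix (Fin n) (Fin n) ℝ))
        + (deriv (gGen ε a b φ) z * fGen ε a b φ z) • (1 : Matrix (Fin n) (Fin n) ℝ)
        + (deriv (gGen ε a b φ) z * gGen ε a b φ z) • (-(b • Q))
        = -(1 : Matrix (Fin n) (Fin n) ℝ) := by
  intro z
  rw [(hasDerivAt_fGen b φ ε ha z).deriv, (hasDerivAt_gGen φ ε ha hb z).deriv]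
  unfold fGen gGen
  have hε2 : ε ^ 2 = 1 := by rcases hε with rfl | rfl <;> norm_num
  have hA : Real.sqrt a ≠ 0 := (Real.sqrt_pos.2 ha).ne'
  have hB : Real.sqrt b ≠ 0 := (Real.sqrt_pos.2 hb).ne'
  have hA2 : Real.sqrt a ^ 2 = a := Real.sq_sqrt ha.le
  have hB2 : Real.sqrt b ^ 2 = b := Real.sq_sqrt hb.le
  have hcs := Real.cosh_sq (Real.sqrt (a * b) * z + φ)
  generalize Real.cosh (Real.sqrt (a * b) * z + φ) = c at *
  generalize Real.sinh (Real.sqrt (a * b) * z + φ) = s at *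
  generalize Real.sqrt a = A at *
  generalize Real.sqrt b = B at *
  subst hA2 hB2
  -- The diagonal blocks cancel.
  have hdiag : ε * (B * s) * (ε * (A⁻¹ * c)) * A ^ 2
      - -(ε * (A * c)) * -(ε * (B⁻¹ * s)) * B ^ 2 = 0 := by
    field_simp
    ring
  -- The off-diagonal blocks give `ε² (s² - c²) = -1`.
  have hoff : -(ε * (B * s) * -(ε * (B⁻¹ * s)))
      + -(ε * (A * c)) * (ε * (A⁻¹ * c)) = -1 := by
    field_simp
    linear_combination (s ^ 2 - c ^ 2) * hε2 - hcs
  linear_combination (norm := module) hdiag • Q + hoff • (1 : Matrix (Fin n) (Fin n) ℝ)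
end

section
/- Let w₀,…,w_{m−1} ∈ ℝ^{2n} with Σ_{i=0}^{m−1} wᵢ = 0, and set α₁ = α₂ = 1/2. For 1 ≤ p, q ≤ 2n and 0 ≤ i ≤ m define the partial sums x_{p,i} := Σ_{k=0}^{i−1} (w_k)_p and y_{q,i} := Σ_{k=0}^{i−1} (w_k)_q (so x_{p,0} = y_{q,0} = 0 and x_{p,m} = y_{q,m} = 0). Then the (p,q) entry of T(W) equals the Gauss shoelace area (1/2)·Σ_{i=0}^{m−1} ( x_{p,i+1}·y_{q,i} − x_{p,i}·y_{q,i+1} ); equivalently, T(W) = (1/2)·Σ_{i=1}^{m−2} Σ_{j=0}^{i−1} ( wᵢ wⱼᵀ − wⱼ wᵢᵀ ). -/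
/-!
Fix entries `p, q` and write `a i = (w i)_p`, `b i = (w i)_q`, with partial sums `X i`, `Y i`.
The `(p, q)` entry of `T(W)` is `∑ (a i b i / 2 + a i Y i)`. Telescoping
`X (i+1) Y (i+1) - X i Y i = a i Y i + X i b i + a i b i` gives
`∑ (a i b i / 2 + a i Y i) = (1/2) ∑ (a i Y i - X i b i) + (1/2) X m Y m`
(`half_diag_add_lower`), and `X m = 0` since the polygon closes. Each summand
`a i Y i - X i b i` is the shoelace term `X (i+1) Y i - X i Y (i+1)`. For the matrix identity,
the summand vanishes at `i = 0`, and at `i = m - 1`, where `X (m-1) = -a (m-1)` and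
`Y (m-1) = -b (m-1)` (`sum_range_shoelace_eq_Icc`).
-/

open Matrix

/-- `T(W)` for `α₁ = α₂ = 1/2`:
`T(W) = ∑_{i<m} ( (1/2) wᵢ wᵢᵀ + (1/2 + 1/2)² ∑_{j<i} wᵢ wⱼᵀ )`. -/
noncomputable def Tmat {n : ℕ} (m : ℕ) (w : ℕ → Fin (2 * n) → ℝ) :
    Matrix (Fin (2 * n)) (Fin (2 * n)) ℝ :=
  ∑ i ∈ Finset.range m,
    (((1 : ℝ) / 2) • Matrix.vecMulVec (w i) (w i)
      + ((1 / 2 + 1 / 2 : ℝ)) ^ 2 • ∑ j ∈ Finset.range i, Matrix.vecMulVec (w i) (w j))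

/-- Symmetrization of the lower-triangular double sum: the symmetric part telescopes to the
product of the full sums. -/
lemma half_diag_add_lower (a b : ℕ → ℝ) (m : ℕ) :
    ∑ i ∈ Finset.range m, (1 / 2 * (a i * b i) + a i * ∑ k ∈ Finset.range i, b k) =
      1 / 2 * ∑ i ∈ Finset.range m,
        (a i * (∑ k ∈ Finset.range i, b k) - (∑ k ∈ Finset.range i, a k) * b i)
      + 1 / 2 * ((∑ k ∈ Finset.range m, a k) * ∑ k ∈ Finset.range m, b k) := by
  induction m with
  | zero => simp
  | succ m ih =>
    simp only [Finset.sum_range_succ _ m]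
    rw [ih]
    ring

/-- For a closed polygon, the first and last terms of the shoelace sum vanish. -/
lemma sum_range_shoelace_eq_Icc (a b : ℕ → ℝ) (m : ℕ)
    (ha : ∑ i ∈ Finset.range m, a i = 0) (hb : ∑ i ∈ Finset.range m, b i = 0) :
    ∑ i ∈ Finset.range m,
        (a i * (∑ k ∈ Finset.range i, b k) - (∑ k ∈ Finset.range i, a k) * b i) =
      ∑ i ∈ Finset.Icc 1 (m - 2),
        (a i * (∑ k ∈ Finset.range i, b k) - (∑ k ∈ Finset.range i, a k) * b i) := by
  symm
  apply Finset.sum_subset_zero_on_sdiff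
  · intro i hi
    simp only [Finset.mem_Icc, Finset.mem_range] at *
    omega
  · intro i hi
    simp only [Finset.mem_sdiff, Finset.mem_Icc, Finset.mem_range] at hi
    obtain rfl | rfl : i = 0 ∨ m = i + 1 := by omega
    · simp
    · rw [Finset.sum_range_succ] at ha hb
      rw [eq_neg_of_add_eq_zero_left ha, eq_neg_of_add_eq_zero_left hb]
      ring
  · intro i _
    rfl

lemma Tmat_apply {n : ℕ} (m : ℕ) (w : ℕ → Fin (2 * n) → ℝ) (p q : Fin (2 * n)) :
    Tmat m w p q = ∑ i ∈ Finset.range m,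
      (1 / 2 * (w i p * w i q) + w i p * ∑ k ∈ Finset.range i, w k q) := by
  have h : (1 / 2 + 1 / 2 : ℝ) = 1 := by norm_num
  simp only [Tmat, h, one_pow, one_smul, Matrix.sum_apply, Matrix.add_apply, Matrix.smul_apply,
    Matrix.vecMulVec_apply, smul_eq_mul, Finset.mul_sum]

/-- Lemma: geometric interpretation of `T(W)` via the Gauss shoelace
formula: if `∑ᵢ wᵢ = 0` and `α₁ = α₂ = 1/2`, then each entry `T(W)_{pq}` is the net area
of the polygon with corner points given by the partial sums of the `p`-th and `q`-th
components, and `T(W) = (1/2) ∑_{i=1}^{m−2} ∑_{j<i} (wᵢwⱼᵀ − wⱼwᵢᵀ)`. -/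
theorem stmt16 {n : ℕ} (m : ℕ) (w : ℕ → Fin (2 * n) → ℝ)
    (hsum : ∑ i ∈ Finset.range m, w i = 0) :
    (∀ p q : Fin (2 * n),
      Tmat m w p q =
        (1 / 2 : ℝ) * ∑ i ∈ Finset.range m,
          ((∑ k ∈ Finset.range (i + 1), w k p) * (∑ k ∈ Finset.range i, w k q)
            - (∑ k ∈ Finset.range i, w k p) * (∑ k ∈ Finset.range (i + 1), w k q))) ∧
    Tmat m w =
      (1 / 2 : ℝ) • ∑ i ∈ Finset.Icc 1 (m - 2), ∑ j ∈ Finset.range i,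
        (Matrix.vecMulVec (w i) (w j) - Matrix.vecMulVec (w j) (w i)) := by
  have hs : ∀ p, ∑ i ∈ Finset.range m, w i p = 0 := fun p => by
    simpa using congrFun hsum p
  have key : ∀ p q, Tmat m w p q = 1 / 2 * ∑ i ∈ Finset.range m,
      (w i p * (∑ k ∈ Finset.range i, w k q) - (∑ k ∈ Finset.range i, w k p) * w i q) := by
    intro p q
    rw [Tmat_apply, half_diag_add_lower (fun i => w i p) (fun i => w i q), hs p]
    ring
  refine ⟨fun p q => ?_, ?_⟩
  · rw [key]
    congr 1
    refine Finset.sum_congr rfl fun i _ => ?_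
    rw [Finset.sum_range_succ, Finset.sum_range_succ]
    ring
  · ext p q
    rw [key, sum_range_shoelace_eq_Icc (fun i => w i p) (fun i => w i q) m (hs p) (hs q)]
    simp only [Matrix.smul_apply, Matrix.sum_apply, Matrix.sub_apply, Matrix.vecMulVec_apply,
      smul_eq_mul, Finset.sum_sub_distrib, Finset.mul_sum, Finset.sum_mul]
end
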